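/- (i) If z ∈ I_n is O-dominant, i.e. D^O(z) = {(i+j−1, j) : j ∈ [k], 1 ≤ i ≤ μ_j} for some strict partition μ_1 > ⋯ > μ_k > 0, then MX^O_z = {A ∈ Mat^O_n : A_{ij} = 0 for all (i,j) ∈ D^O(z)}. (ii) If n is even and z ∈ I^FPF_n is Sp-dominant, i.e. D^Sp(z) = {(i+j, j) : j ∈ [k], 1 ≤ i ≤ μ_j} for some strict partition μ, then MX^Sp_z = {A ∈ Mat^Sp_n : A_{ij} = 0 for all (i,j) ∈ D^Sp(z)}. -/

import Mathlib

open MvPolynomial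

noncomputable section

/-- The coefficient ring `ℤ[β]`. -/
abbrev Rb : Type := Polynomial ℤ

/-- The indeterminate `β`. -/
def bb : Rb := Polynomial.X

/-- The order-reversing permutation `n⋯321`, i.e. `i ↦ n+1-i` in 1-indexed notation. -/
def revPerm (n : ℕ) : Equiv.Perm (Fin n) :=
  ⟨Fin.rev, Fin.rev, fun i => Fin.rev_rev i, fun i => Fin.rev_rev i⟩

/-- `z` is a fixed-point-free involution. -/
def IsFPF {n : ℕ} (z : Equiv.Perm (Fin n)) : Prop :=
  z * z = 1 ∧ ∀ i, z i ≠ i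

/-- `x_i + x_j + β x_i x_j`. -/
def oplus {n : ℕ} (i j : Fin n) : MvPolynomial (Fin n) Rb :=
  X i + X j + C bb * (X i * X j)

/-- `IsDivDiffB i j f g` encodes `∂_i^{(β)} f = g` where `j = i+1`:
`∂_i^{(β)} f = ((1+βx_j) f - s_i((1+βx_j) f)) / (x_i - x_j)`, stated multiplicatively
(the quotient is exact, and `g` is uniquely determined since the ring is a domain). -/
def IsDivDiffB {n : ℕ} (i j : Fin n) (f g : MvPolynomial (Fin n) Rb) : Prop :=
  (X i - X j) * g =
    (1 + C bb * X j) * f - rename ⇑(Equiv.swap i j) ((1 + C bb * X j) * f)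

/-- `∏_{1 ≤ i < j ≤ n-i} (x_i + x_j + β x_i x_j)` (variables 0-indexed). -/
def spTop (n : ℕ) : MvPolynomial (Fin n) Rb :=
  ∏ p ∈ Finset.univ.filter
      (fun p : Fin n × Fin n => p.1 < p.2 ∧ (p.1 : ℕ) + (p.2 : ℕ) + 2 ≤ n),
    oplus p.1 p.2

/-- `x_1^{n-1} x_2^{n-2} ⋯ x_{n-1}^1` (variables 0-indexed). -/
def grTop (n : ℕ) : MvPolynomial (Fin n) Rb :=
  ∏ a : Fin n, X a ^ (n - 1 - (a : ℕ))

/-- The defining property of the family of symplectic Grothendieck polynomials. -/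
def IsSpFam (n : ℕ) (G : Equiv.Perm (Fin n) → MvPolynomial (Fin n) Rb) : Prop :=
  G (revPerm n) = spTop n ∧
    ∀ z : Equiv.Perm (Fin n), IsFPF z →
      ∀ i j : Fin n, (j : ℕ) = (i : ℕ) + 1 →
        z i ≠ j → z j ≠ i → z j < z i →
          IsDivDiffB i j (G z) (G (Equiv.swap i j * z * Equiv.swap i j))

/-- The defining property of the family of Grothendieck polynomials. -/
def IsGrothFam (n : ℕ) (G : Equiv.Perm (Fin n) → MvPolynomial (Fin n) Rb) : Prop :=
  G (revPerm n) = grTop n ∧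
    ∀ (w : Equiv.Perm (Fin n)) (i j : Fin n), (j : ℕ) = (i : ℕ) + 1 →
      w j < w i → IsDivDiffB i j (G w) (G (w * Equiv.swap i j))

/-- The length (number of inversions) of a permutation. -/
def invLen {n : ℕ} (w : Equiv.Perm (Fin n)) : ℕ :=
  (Finset.univ.filter (fun p : Fin n × Fin n => p.1 < p.2 ∧ w p.2 < w p.1)).card

/-- The fixed-point-free involution length `ℓ_fpf(z) = #{(i,j) : z(i) > z(j) < i < j}`. -/
def fpfLen {n : ℕ} (z : Equiv.Perm (Fin n)) : ℕ :=
  (Finset.univ.filter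
      (fun p : Fin n × Fin n => z p.2 < z p.1 ∧ z p.2 < p.1 ∧ p.1 < p.2)).card

/-- The underlying function of `Θ = (1,2)(3,4)⋯(n-1,n)`. -/
def thetaFun (n : ℕ) (hn : n % 2 = 0) (i : Fin n) : Fin n :=
  ⟨if (i : ℕ) % 2 = 0 then (i : ℕ) + 1 else (i : ℕ) - 1, by
    have hi := i.isLt
    split_ifs with h <;> omega⟩

/-- The fixed-point-free involution `Θ = (1,2)(3,4)⋯(n-1,n)`. -/
def theta (n : ℕ) (hn : n % 2 = 0) : Equiv.Perm (Fin n) :=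
  Function.Involutive.toPerm (thetaFun n hn) (by
    intro i
    have hi := i.isLt
    apply Fin.ext
    simp only [thetaFun]
    split_ifs <;> omega)

/-- One step of the partial Hecke action: `heckeStep a z = some (z · s_{a+1})` when defined,
with `a` a 0-indexed letter (so `a` corresponds to the simple transposition of `a+1, a+2`
in 1-indexed notation). -/
def heckeStep {n : ℕ} (a : ℕ) (z : Equiv.Perm (Fin n)) : Option (Equiv.Perm (Fin n)) :=
  if h : a + 1 < n then
    let i : Fin n := ⟨a, Nat.lt_of_succ_lt h⟩
    let j : Fin n := ⟨a + 1, h⟩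
    if z i < z j then some (Equiv.swap i j * z * Equiv.swap i j)
    else if z i = j ∧ z j = i then none
    else if z i ≠ j ∧ z j ≠ i ∧ z j < z i then some z
    else none
  else none

/-- Apply a word of (0-indexed) letters to `z` via the partial Hecke action. -/
def heckeApply {n : ℕ} (l : List ℕ) (z : Equiv.Perm (Fin n)) :
    Option (Equiv.Perm (Fin n)) :=
  l.foldl (fun o a => o.bind (heckeStep a)) (some z)

/-- The simple transposition corresponding to the 0-indexed letter `a`. -/
def swapAt (n : ℕ) (a : ℕ) : Equiv.Perm (Fin n) :=
  if h : a + 1 < n then Equiv.swap ⟨a, Nat.lt_of_succ_lt h⟩ ⟨a + 1, h⟩ else 1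

/-- The permutation `s_{i_1} s_{i_2} ⋯ s_{i_l}` of a word. -/
def wordToPerm (n : ℕ) (l : List ℕ) : Equiv.Perm (Fin n) := (l.map (swapAt n)).prod

/-- `l` is a reduced word for `w`. -/
def IsReducedWord (n : ℕ) (w : Equiv.Perm (Fin n)) (l : List ℕ) : Prop :=
  (∀ a ∈ l, a + 1 < n) ∧ wordToPerm n l = w ∧ l.length = invLen w

/-- The set of Hecke atoms `B_fpf(z)`. -/
def Bfpf (n : ℕ) (hn : n % 2 = 0) (z : Equiv.Perm (Fin n)) :
    Finset (Equiv.Perm (Fin n)) :=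
  @Finset.filter _
    (fun w => ∃ l : List ℕ, IsReducedWord n w l ∧ heckeApply l (theta n hn) = some z)
    (Classical.decPred _) Finset.univ

/-- `extPerm z w` is the permutation `z × w` acting on the first `m` letters by `z`
and the last `n` letters by `w`. -/
def extPerm {m n : ℕ} (z : Equiv.Perm (Fin m)) (w : Equiv.Perm (Fin n)) :
    Equiv.Perm (Fin (m + n)) :=
  finSumFinEquiv.symm.trans ((Equiv.sumCongr z w).trans finSumFinEquiv)

/-- `rank(z_{[i][j]}) = #{k ∈ [j] : z(k) ≤ i}` (1-indexed sizes `i, j`). -/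
def permRank {n : ℕ} (z : Equiv.Perm (Fin n)) (i j : ℕ) : ℕ :=
  (Finset.univ.filter (fun k : Fin n => (k : ℕ) < j ∧ ((z k : Fin n) : ℕ) < i)).card

/-- The rank of the upper-left `i × j` corner of `A` (1-indexed sizes `i, j ≤ n`). -/
def cornerRank {n : ℕ} (A : Matrix (Fin n) (Fin n) ℂ) (i j : ℕ) : ℕ :=
  Matrix.rank (Matrix.of fun (a : Fin (min i n)) (b : Fin (min j n)) =>
    A ⟨(a : ℕ), lt_of_lt_of_le a.isLt (min_le_right i n)⟩
      ⟨(b : ℕ), lt_of_lt_of_le b.isLt (min_le_right j n)⟩)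

/-- The orthogonal Rothe diagram `D^O(z) = {(i, z(j)) : z(i) > z(j) ≤ i < j}` (0-indexed). -/
def DO (n : ℕ) (z : Equiv.Perm (Fin n)) : Finset (Fin n × Fin n) :=
  Finset.image (fun p : Fin n × Fin n => (p.1, z p.2))
    (Finset.univ.filter (fun p : Fin n × Fin n => z p.2 < z p.1 ∧ z p.2 ≤ p.1 ∧ p.1 < p.2))

/-- The symplectic Rothe diagram `D^Sp(z) = {(i, z(j)) : z(i) > z(j) < i < j}` (0-indexed). -/
def DSp (n : ℕ) (z : Equiv.Perm (Fin n)) : Finset (Fin n × Fin n) :=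
  Finset.image (fun p : Fin n × Fin n => (p.1, z p.2))
    (Finset.univ.filter (fun p : Fin n × Fin n => z p.2 < z p.1 ∧ z p.2 < p.1 ∧ p.1 < p.2))

/-- The essential set `Ess(D) = {(i,j) ∈ D : (i,j+1) ∉ D and (i+1,j) ∉ D}`. -/
def Ess {n : ℕ} (D : Finset (Fin n × Fin n)) : Finset (Fin n × Fin n) :=
  D.filter (fun p =>
    (∀ q ∈ D, ¬(q.1 = p.1 ∧ (q.2 : ℕ) = (p.2 : ℕ) + 1)) ∧
    (∀ q ∈ D, ¬((q.1 : ℕ) = (p.1 : ℕ) + 1 ∧ q.2 = p.2)))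

/-- A permutation is vexillary if it avoids the pattern 2143. -/
def Vexillary {n : ℕ} (z : Equiv.Perm (Fin n)) : Prop :=
  ¬ ∃ i j k l : Fin n, i < j ∧ j < k ∧ k < l ∧ z j < z i ∧ z i < z l ∧ z l < z k

/-- The ideal of `ℤ[x_1,…,x_N]` generated by symmetric polynomials with zero constant term. -/
def ILambda (N : ℕ) : Ideal (MvPolynomial (Fin N) ℤ) :=
  Ideal.span {f : MvPolynomial (Fin N) ℤ |
    (∀ σ : Equiv.Perm (Fin N), rename (⇑σ) f = f) ∧ coeff 0 f = 0}

/-- Substitute `x_j = 0` for all `j > n`, producing a polynomial in `x_1,…,x_n`. -/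
def truncVars (n N : ℕ) (f : MvPolynomial (Fin N) Rb) : MvPolynomial (Fin n) Rb :=
  aeval (fun i : Fin N => if h : (i : ℕ) < n then X ⟨(i : ℕ), h⟩ else 0) f

/-- The order used to list the elements of a pipe-dream subset `S`:
rows weakly increasing, columns strictly decreasing within a row. -/
def rowOrder {n : ℕ} (p q : Fin n × Fin n) : Prop :=
  p.1 < q.1 ∨ (p.1 = q.1 ∧ q.2 < p.2)

/-- `δ(S)` is a symplectic Hecke word for `z` (with Hecke words computed from `Θ`);
here `L` is the listing of `S` in the order `rowOrder`, and `(a,b) ∈ S` (0-indexed)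
contributes the 0-indexed letter `a + b`, i.e. the 1-indexed letter `(b+1)+(a+1)-1`. -/
def DeltaHeckeWord (n : ℕ) (hn : n % 2 = 0) (z : Equiv.Perm (Fin n))
    (S : Finset (Fin n × Fin n)) : Prop :=
  ∃ L : List (Fin n × Fin n), L.toFinset = S ∧ L.Chain' rowOrder ∧
    heckeApply (L.map (fun p => (p.1 : ℕ) + (p.2 : ℕ))) (theta n hn) = some z


/-!
Comparing the rank conditions at `(i, j)` and `(i + 1, j + 1)` shows that a condition violated first
is violated by exactly one, and only at a cell of the Rothe diagram `D(w)`. When everything weakly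
north-west of a cell `p` lies in `D(w)`, the permutation matrix vanishes there, so the condition at
`p` says that the corner of `A` vanishes; this settles the case in which `D(w)` is a lower set.

For an involution `z`, `D(z)` is symmetric and `D^O(z)`, `D^Sp(z)` are its parts weakly and strictly
below the diagonal. A shifted shape `D^O(z)` makes `D(z)` a lower set. A shifted shape `D^Sp(z)`
only puts the cells north-west of off-diagonal cells in `D(z)`; at a diagonal cell both ranks are
even, so the condition cannot fail by exactly one.
-/

section Alternating

variable {m n R K : Type*}

theorem even_card_of_fixedPointFree {α : Type*} {f : α → α} (hf : Function.Involutive f)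
    {s : Finset α} (hs : ∀ a ∈ s, f a ∈ s) (hne : ∀ a ∈ s, f a ≠ a) : Even s.card := by
  have hsum : ∑ _a ∈ s, (1 : ZMod 2) = 0 :=
    Finset.sum_involution (fun a _ => f a) (fun _ _ => CharTwo.add_self_eq_zero 1)
      (fun a ha _ => hne a ha) hs (fun a _ => hf a)
  rw [Finset.sum_const, nsmul_one] at hsum
  exact ZMod.natCast_eq_zero_iff_even.1 hsum

/-- Alternating matrices: skew-symmetric with zero diagonal. In characteristic two the second
condition does not follow from the first. -/
structure IsAlternating [Zero R] [Neg R] (A : Matrix n n R) : Prop where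
  transpose_eq_neg : A.transpose = -A
  apply_self (i : n) : A i i = 0

namespace IsAlternating

theorem of_transpose_eq_neg [Ring R] [NoZeroDivisors R] [CharZero R] {A : Matrix n n R}
    (hA : A.transpose = -A) : IsAlternating A :=
  ⟨hA, fun i => self_eq_neg.1 (congrFun₂ hA i i)⟩

theorem apply_eq_neg [Zero R] [Neg R] {A : Matrix n n R} (hA : IsAlternating A) (i j : n) :
    A i j = -A j i :=
  congrFun₂ hA.transpose_eq_neg j i

theorem submatrix [Zero R] [Neg R] {A : Matrix n n R} (hA : IsAlternating A) (f : m → n) :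
    IsAlternating (A.submatrix f f) :=
  ⟨Matrix.ext fun _ _ => hA.apply_eq_neg _ _, fun _ => hA.apply_self _⟩

/-- In the Leibniz expansion the terms of `σ` and `σ⁻¹` cancel, and an involution `σ` of a set of
odd cardinality has a fixed point, so that its term contains a diagonal entry. -/
theorem det_eq_zero_of_odd_card [CommRing R] [Fintype n] [DecidableEq n] {A : Matrix n n R}
    (hA : IsAlternating A) (hn : Odd (Fintype.card n)) : A.det = 0 := by
  rw [Matrix.det_apply']
  refine Finset.sum_involution (fun σ _ => σ⁻¹) (fun σ _ => ?_) (fun σ _ hσ hinv => hσ ?_)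
    (fun _ _ => Finset.mem_univ _) (fun σ _ => inv_inv σ)
  · have hprod : ∏ i, A (σ⁻¹ i) i = -∏ i, A (σ i) i := calc
      ∏ i, A (σ⁻¹ i) i = ∏ i, A i (σ i) := by
        simpa using (Equiv.prod_comp σ fun i => A (σ⁻¹ i) i).symm
      _ = ∏ i, -A (σ i) i := Finset.prod_congr rfl fun i _ => hA.apply_eq_neg i (σ i)
      _ = -∏ i, A (σ i) i := by rw [Finset.prod_neg, Finset.card_univ, hn.neg_one_pow, neg_one_mul]
    rw [hprod, Equiv.Perm.sign_inv, mul_neg, add_neg_cancel]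
  · obtain ⟨i, hi⟩ : ∃ i, σ i = i := by
      by_contra! hne
      refine Nat.not_even_iff_odd.2 hn (even_card_of_fixedPointFree (f := σ) (fun i => ?_)
        (fun i _ => Finset.mem_univ (σ i)) fun i _ => hne i)
      exact (Equiv.Perm.inv_eq_iff_eq.1 (congrArg (· i) hinv)).symm
    rw [Finset.prod_eq_zero (Finset.mem_univ i) (by rw [hi, hA.apply_self]), mul_zero]

end IsAlternating

theorem exists_eq_mul_submatrix_rows [Field K] [Finite m] [Fintype n] (A : Matrix m n K) :
    ∃ (g : Fin A.rank → m) (B : Matrix m (Fin A.rank) K), A = B * A.submatrix g id := by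
  rw [Matrix.rank_eq_finrank_span_row]
  obtain ⟨f, hf, hspan, -⟩ := Submodule.exists_fun_fin_finrank_span_eq K (Set.range A.row)
  choose g hg using hf
  have hrow (a : m) : ∃ c : Fin _ → K, ∑ i, c i • f i = A.row a := by
    rw [← Submodule.mem_span_range_iff_exists_fun, hspan]
    exact Submodule.subset_span ⟨a, rfl⟩
  choose B hB using hrow
  refine ⟨g, Matrix.of B, Matrix.ext fun a b => ?_⟩
  rw [Matrix.mul_apply]
  simpa [← hg] using (congrFun (hB a) b).symm

theorem exists_rank_le_rank_submatrix_of_transpose_eq_neg [Field K] [Fintype n]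
    {A : Matrix n n K} (hA : A.transpose = -A) :
    ∃ g : Fin A.rank → n, A.rank ≤ (A.submatrix g g).rank := by
  obtain ⟨g, B, hB⟩ := exists_eq_mul_submatrix_rows A
  have hcol : A.submatrix id g = B * A.submatrix g g :=
    congrArg (Matrix.submatrix · id g) hB
  have htranspose : (A.submatrix g id).transpose = -B * A.submatrix g g := by
    rw [Matrix.transpose_submatrix, hA, Matrix.neg_mul, ← hcol]
    rfl
  refine ⟨g, ?_⟩
  calc A.rank = (B * A.submatrix g id).rank := congrArg Matrix.rank hB
    _ ≤ (A.submatrix g id).rank := Matrix.rank_mul_le_right _ _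
    _ = (-B * A.submatrix g g).rank := by rw [← htranspose, Matrix.rank_transpose]
    _ ≤ (A.submatrix g g).rank := Matrix.rank_mul_le_right _ _

theorem det_ne_zero_of_card_le_rank [Field K] [Fintype n] [DecidableEq n] {A : Matrix n n K}
    (hA : Fintype.card n ≤ A.rank) : A.det ≠ 0 := by
  rw [← isUnit_iff_ne_zero, ← Matrix.isUnit_iff_isUnit_det,
    ← Matrix.linearIndependent_rows_iff_isUnit, linearIndependent_iff_card_le_finrank_span,
    Set.finrank, ← Matrix.rank_eq_finrank_span_row]
  exact hA

theorem IsAlternating.even_rank [Field K] [Fintype n] {A : Matrix n n K} (hA : IsAlternating A) :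
    Even A.rank := by
  obtain ⟨g, hg⟩ := exists_rank_le_rank_submatrix_of_transpose_eq_neg hA.transpose_eq_neg
  by_contra hodd
  refine det_ne_zero_of_card_le_rank ((Fintype.card_fin _).trans_le hg) ?_
  exact (hA.submatrix g).det_eq_zero_of_odd_card (by simpa using hodd)

end Alternating

section Corner

variable {m n : ℕ} {K : Type*}

/-- The upper-left `i × j` corner `A_{[i][j]}`. For `i > m` or `j > n` it is cut off at the border
of `A`. -/
def corner (A : Matrix (Fin m) (Fin n) K) (i j : ℕ) :
    Matrix {a : Fin m // (a : ℕ) < i} {b : Fin n // (b : ℕ) < j} K :=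
  A.toBlock (fun a => (a : ℕ) < i) (fun b => (b : ℕ) < j)

theorem cornerRank_eq_rank_corner (A : Matrix (Fin n) (Fin n) ℂ) (i j : ℕ) :
    cornerRank A i j = (corner A i j).rank :=
  let e (i : ℕ) : Fin (min i n) ≃ {a : Fin n // (a : ℕ) < i} :=
    (Fin.castLEquiv (min_le_right i n)).trans (Equiv.subtypeEquivRight (by simp))
  (corner A i j).rank_submatrix (e i) (e j)

variable [Field K]

theorem rank_le_rank_submatrix_add_one {l m n : Type*} [Finite l] [Finite m] [Fintype n]
    (A : Matrix m n K) (f : l → m) (a : m) (hf : ∀ x, x ≠ a → x ∈ Set.range f) :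
    A.rank ≤ (A.submatrix f id).rank + 1 := by
  rw [Matrix.rank_eq_finrank_span_row, Matrix.rank_eq_finrank_span_row]
  have hspan : Submodule.span K (Set.range A.row) ≤
      Submodule.span K (Set.range (A.submatrix f id).row) ⊔ Submodule.span K {A.row a} := by
    rw [Submodule.span_le]
    rintro _ ⟨x, rfl⟩
    obtain rfl | hx := eq_or_ne x a
    · exact Submodule.mem_sup_right (Submodule.mem_span_singleton_self _)
    · obtain ⟨y, rfl⟩ := hf x hx
      exact Submodule.mem_sup_left (Submodule.subset_span ⟨y, rfl⟩)
  calc _ ≤ _ := Submodule.finrank_mono hspan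
    _ ≤ _ := Submodule.finrank_add_le_finrank_add_finrank _ _
    _ ≤ _ := Nat.add_le_add_left ((finrank_span_le_card _).trans (by simp)) _

theorem rank_corner_transpose (A : Matrix (Fin m) (Fin n) K) (i j : ℕ) :
    (corner A.transpose i j).rank = (corner A j i).rank :=
  Matrix.rank_transpose (corner A j i)

theorem rank_corner_succ_left_le (A : Matrix (Fin m) (Fin n) K) (a : Fin m) (j : ℕ) :
    (corner A (a + 1) j).rank ≤ (corner A a j).rank + 1 := by
  refine rank_le_rank_submatrix_add_one (corner A (a + 1) j)
    (fun x : {x : Fin m // (x : ℕ) < a} => ⟨x, x.2.trans (Nat.lt_succ_self a)⟩)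
    ⟨a, Nat.lt_succ_self a⟩ fun x hx => ⟨⟨x, ?_⟩, rfl⟩
  exact (Nat.lt_succ_iff.1 x.2).lt_of_ne fun h => hx (Subtype.ext (Fin.ext h))

theorem rank_corner_succ_right_le (A : Matrix (Fin m) (Fin n) K) (i : ℕ) (b : Fin n) :
    (corner A i (b + 1)).rank ≤ (corner A i b).rank + 1 := by
  simpa only [rank_corner_transpose] using rank_corner_succ_left_le A.transpose b i

theorem rank_corner_eq_zero_iff (A : Matrix (Fin m) (Fin n) K) (i j : ℕ) :
    (corner A i j).rank = 0 ↔ ∀ (a : Fin m) (b : Fin n), (a : ℕ) < i → (b : ℕ) < j → A a b = 0 := by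
  rw [Matrix.rank_eq_finrank_span_row, Submodule.finrank_eq_zero, Submodule.span_eq_bot,
    Set.forall_mem_range]
  exact ⟨fun h a b ha hb => congrFun (h ⟨a, ha⟩) ⟨b, hb⟩,
    fun h a => funext fun b => h a b a.2 b.2⟩

theorem rank_corner_succ_succ_eq_zero_iff (A : Matrix (Fin m) (Fin n) K) (p : Fin m × Fin n) :
    (corner A (p.1 + 1) (p.2 + 1)).rank = 0 ↔ ∀ q ≤ p, A q.1 q.2 = 0 := by
  simp only [rank_corner_eq_zero_iff, Nat.lt_succ_iff, Prod.forall, Prod.le_def, Fin.le_def,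
    and_imp]

end Corner

section PermRank

variable {n : ℕ} {w z : Equiv.Perm (Fin n)}

/-- The Rothe diagram `D(w) = {(i, w(j)) : w(i) > w(j), i < j}` of `w⁻¹`, transposed so as to fit
`permRank`, whose permutation matrix has its ones at the positions `(w k, k)`. For an involution
this is the usual Rothe diagram. -/
def rotheDiagram (w : Equiv.Perm (Fin n)) : Set (Fin n × Fin n) :=
  {p | p.2 < w⁻¹ p.1 ∧ p.1 < w p.2}

theorem permRank_lt_permRank {i i' j j' : ℕ} (hi : i ≤ i') (hj : j ≤ j') (k : Fin n)
    (hk : (k : ℕ) < j') (hwk : (w k : ℕ) < i') (hout : j ≤ k ∨ i ≤ w k) :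
    permRank w i j < permRank w i' j' := by
  refine Finset.card_lt_card ((Finset.ssubset_iff_of_subset fun x hx => ?_).2 ⟨k, ?_, ?_⟩)
  · simp only [Finset.mem_filter, Finset.mem_univ, true_and] at hx ⊢
    omega
  · simp [hk, hwk]
  · simp only [Finset.mem_filter, Finset.mem_univ, true_and]
    omega

theorem permRank_lt_succ_left {a : Fin n} {j : ℕ} (ha : (w⁻¹ a : ℕ) < j) :
    permRank w a j < permRank w (a + 1) j :=
  permRank_lt_permRank (Nat.le_succ a) le_rfl (w⁻¹ a) ha (by simp) (Or.inr (by simp))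

theorem permRank_lt_succ_right {i : ℕ} {b : Fin n} (hb : (w b : ℕ) < i) :
    permRank w i b < permRank w i (b + 1) :=
  permRank_lt_permRank le_rfl (Nat.le_succ b) b (Nat.lt_succ_self b) hb (Or.inl le_rfl)

theorem permRank_le_permRank {i i' j j' : ℕ} (hi : i ≤ i') (hj : j ≤ j') :
    permRank w i j ≤ permRank w i' j' :=
  Finset.card_le_card fun x hx => by
    simp only [Finset.mem_filter, Finset.mem_univ, true_and] at hx ⊢
    omega

theorem permRank_succ_succ_eq_zero {p : Fin n × Fin n} (hp : ∀ q ≤ p, q ∈ rotheDiagram w) :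
    permRank w (p.1 + 1) (p.2 + 1) = 0 := by
  rw [permRank, Finset.card_eq_zero, Finset.filter_eq_empty_iff]
  rintro k - ⟨hk, hwk⟩
  exact lt_irrefl _ (hp (w k, k) ⟨Nat.lt_succ_iff.1 hwk, Nat.lt_succ_iff.1 hk⟩).2

theorem IsFPF.even_permRank (hz : IsFPF z) (i : ℕ) : Even (permRank z i i) := by
  have hinv : Function.Involutive z := fun k => congrArg (· k) hz.1
  refine even_card_of_fixedPointFree hinv (fun k hk => ?_) fun k _ => hz.2 k
  simpa [hinv k, and_comm] using hk

end PermRank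

section MatrixSchubertVariety

variable {n : ℕ} {K : Type*} [Field K] {w z : Equiv.Perm (Fin n)} {A : Matrix (Fin n) (Fin n) K}

/-- The matrix Schubert variety `MX_w`; `MX^O_z` and `MX^Sp_z` are its symmetric and alternating
parts. The indices `i`, `j` are sizes of corners, as in `permRank`. -/
def matrixSchubertVariety (K : Type*) [Field K] (w : Equiv.Perm (Fin n)) :
    Set (Matrix (Fin n) (Fin n) K) :=
  {A | ∀ i j : ℕ, i ≤ n → j ≤ n → (corner A i j).rank ≤ permRank w i j}

/-- Outside `rotheDiagram w` the rank condition at a cell follows from the one above it or the one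
to its left; inside, it can be violated by at most one. -/
theorem mem_matrixSchubertVariety_of_rank_ne
    (hA : ∀ p ∈ rotheDiagram w,
      (corner A (p.1 + 1) (p.2 + 1)).rank ≠ permRank w (p.1 + 1) (p.2 + 1) + 1) :
    A ∈ matrixSchubertVariety K w := by
  intro i j hi hj
  induction i generalizing j with
  | zero =>
    have hrank : (corner A 0 j).rank = 0 :=
      (rank_corner_eq_zero_iff A _ _).2 fun a _ ha => absurd ha a.1.not_lt_zero
    exact hrank.trans_le (Nat.zero_le _)
  | succ i ih_row =>
    induction j with
    | zero =>
      have hrank : (corner A (i + 1) 0).rank = 0 :=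
        (rank_corner_eq_zero_iff A _ _).2 fun _ b _ hb => absurd hb b.1.not_lt_zero
      exact hrank.trans_le (Nat.zero_le _)
    | succ j ih_col =>
      let a : Fin n := ⟨i, hi⟩
      let b : Fin n := ⟨j, hj⟩
      have above : (corner A i (j + 1)).rank ≤ permRank w i (j + 1) := ih_row (j + 1) (by omega) hj
      have left : (corner A (i + 1) j).rank ≤ permRank w (i + 1) j := ih_col (by omega)
      have row_step : (corner A (i + 1) (j + 1)).rank ≤ (corner A i (j + 1)).rank + 1 :=
        rank_corner_succ_left_le A a (j + 1)
      have col_step : (corner A (i + 1) (j + 1)).rank ≤ (corner A (i + 1) j).rank + 1 :=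
        rank_corner_succ_right_le A (i + 1) b
      by_cases ha : b < w⁻¹ a
      · by_cases hb : a < w b
        · have mono : permRank w i (j + 1) ≤ permRank w (i + 1) (j + 1) :=
            permRank_le_permRank (by omega) le_rfl
          have inside : (corner A (i + 1) (j + 1)).rank ≠ permRank w (i + 1) (j + 1) + 1 :=
            hA (a, b) ⟨ha, hb⟩
          omega
        · have gain : permRank w (i + 1) j < permRank w (i + 1) (j + 1) :=
            permRank_lt_succ_right (b := b) (Nat.lt_succ_iff.2 (not_lt.1 hb))
          omega
      · have gain : permRank w i (j + 1) < permRank w (i + 1) (j + 1) :=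
          permRank_lt_succ_left (a := a) (Nat.lt_succ_iff.2 (not_lt.1 ha))
        omega

theorem apply_eq_zero_of_mem_matrixSchubertVariety (hA : A ∈ matrixSchubertVariety K w)
    {p : Fin n × Fin n} (hp : ∀ q ≤ p, q ∈ rotheDiagram w) : A p.1 p.2 = 0 := by
  have hrank := hA (p.1 + 1) (p.2 + 1) p.1.2 p.2.2
  rw [permRank_succ_succ_eq_zero hp, Nat.le_zero, rank_corner_succ_succ_eq_zero_iff] at hrank
  exact hrank p le_rfl

theorem mem_matrixSchubertVariety_iff_of_isLowerSet (hw : IsLowerSet (rotheDiagram w)) :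
    A ∈ matrixSchubertVariety K w ↔ ∀ p ∈ rotheDiagram w, A p.1 p.2 = 0 := by
  refine ⟨fun hA p hp => apply_eq_zero_of_mem_matrixSchubertVariety hA fun q hq => hw hq hp,
    fun hA => mem_matrixSchubertVariety_of_rank_ne fun p hp => ?_⟩
  rw [(rank_corner_succ_succ_eq_zero_iff A p).2 fun q hq => hA q (hw hq hp)]
  exact (Nat.succ_ne_zero _).symm

theorem IsAlternating.mem_matrixSchubertVariety_iff (hA : IsAlternating A) (hz : IsFPF z)
    (hD : ∀ p ∈ rotheDiagram z, p.1 ≠ p.2 → ∀ q ≤ p, q ∈ rotheDiagram z) :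
    A ∈ matrixSchubertVariety K z ↔ ∀ p ∈ rotheDiagram z, A p.1 p.2 = 0 := by
  refine ⟨fun hmem p hp => ?_, fun hzero => mem_matrixSchubertVariety_of_rank_ne ?_⟩
  · rcases eq_or_ne p.1 p.2 with hdiag | hoff
    · rw [hdiag, hA.apply_self]
    · exact apply_eq_zero_of_mem_matrixSchubertVariety hmem (hD p hp hoff)
  · rintro ⟨a, b⟩ hp
    rcases eq_or_ne a b with rfl | hoff
    · intro hrank
      have hodd := (hz.even_permRank (a + 1)).add_one
      rw [← hrank] at hodd
      exact Nat.not_even_iff_odd.2 hodd (hA.submatrix Subtype.val).even_rank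
    · rw [(rank_corner_succ_succ_eq_zero_iff A (a, b)).2 fun q hq => hzero q (hD _ hp hoff q hq)]
      exact (Nat.succ_ne_zero _).symm

end MatrixSchubertVariety

section Dominant

variable {n k : ℕ} {R : Type*} {z : Equiv.Perm (Fin n)} {μ : Fin k → ℕ}

theorem swap_mem_rotheDiagram_iff (hz : z * z = 1) {p : Fin n × Fin n} :
    p.swap ∈ rotheDiagram z ↔ p ∈ rotheDiagram z := by
  simp only [rotheDiagram, inv_eq_of_mul_eq_one_left hz, Set.mem_ofPred_eq, Prod.fst_swap,
    Prod.snd_swap, and_comm]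

theorem mem_image_mk_apply_iff {α : Type*} [DecidableEq α] (w : Equiv.Perm α)
    {s : Finset (α × α)} {p : α × α} :
    p ∈ s.image (fun q => (q.1, w q.2)) ↔ (p.1, w⁻¹ p.2) ∈ s := by
  rw [← Finset.mem_coe, Finset.coe_image,
    show (fun q : α × α => (q.1, w q.2)) = (Equiv.refl α).prodCongr w from rfl,
    Equiv.image_eq_preimage_symm]
  rfl

theorem mem_DO_iff (hz : z * z = 1) {p : Fin n × Fin n} :
    p ∈ DO n z ↔ p ∈ rotheDiagram z ∧ p.2 ≤ p.1 := by
  have hinv (a : Fin n) : z (z a) = a := congrArg (· a) hz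
  simp only [DO, mem_image_mk_apply_iff, rotheDiagram, Finset.mem_filter, Finset.mem_univ,
    true_and, Set.mem_ofPred_eq, inv_eq_of_mul_eq_one_left hz, hinv]
  tauto

theorem mem_DSp_iff (hz : z * z = 1) {p : Fin n × Fin n} :
    p ∈ DSp n z ↔ p ∈ rotheDiagram z ∧ p.2 < p.1 := by
  have hinv (a : Fin n) : z (z a) = a := congrArg (· a) hz
  simp only [DSp, mem_image_mk_apply_iff, rotheDiagram, Finset.mem_filter, Finset.mem_univ,
    true_and, Set.mem_ofPred_eq, inv_eq_of_mul_eq_one_left hz, hinv]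
  tauto

theorem forall_mem_rotheDiagram_apply_eq_zero_iff_DO [Zero R] (hz : z * z = 1)
    {A : Matrix (Fin n) (Fin n) R} (hA : A.IsSymm) :
    (∀ p ∈ rotheDiagram z, A p.1 p.2 = 0) ↔ ∀ p ∈ DO n z, A p.1 p.2 = 0 := by
  refine ⟨fun h p hp => h p ((mem_DO_iff hz).1 hp).1, fun h p hp => ?_⟩
  rcases le_total p.2 p.1 with hle | hle
  · exact h p ((mem_DO_iff hz).2 ⟨hp, hle⟩)
  · rw [← hA.apply]
    exact h p.swap ((mem_DO_iff hz).2 ⟨(swap_mem_rotheDiagram_iff hz).2 hp, hle⟩)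

theorem forall_mem_rotheDiagram_apply_eq_zero_iff_DSp [NegZeroClass R] (hz : z * z = 1)
    {A : Matrix (Fin n) (Fin n) R} (hA : IsAlternating A) :
    (∀ p ∈ rotheDiagram z, A p.1 p.2 = 0) ↔ ∀ p ∈ DSp n z, A p.1 p.2 = 0 := by
  refine ⟨fun h p hp => h p ((mem_DSp_iff hz).1 hp).1, fun h p hp => ?_⟩
  rcases lt_trichotomy p.2 p.1 with hlt | heq | hlt
  · exact h p ((mem_DSp_iff hz).2 ⟨hp, hlt⟩)
  · rw [heq, hA.apply_self]
  · have hzero : A p.2 p.1 = 0 :=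
      h p.swap ((mem_DSp_iff hz).2 ⟨(swap_mem_rotheDiagram_iff hz).2 hp, hlt⟩)
    rw [hA.apply_eq_neg, hzero, neg_zero]

theorem isLowerSet_rotheDiagram (hz : z * z = 1)
    (hD : ∀ p ∈ DO n z, ∀ q ≤ p, q.2 ≤ q.1 → q ∈ DO n z) : IsLowerSet (rotheDiagram z) := by
  intro p q hqp hp
  wlog hpd : p.2 ≤ p.1 generalizing p q
  · rw [← swap_mem_rotheDiagram_iff hz] at hp ⊢
    exact this (Prod.swap_le_swap.2 hqp) hp (le_of_not_ge hpd)
  have hpO : p ∈ DO n z := (mem_DO_iff hz).2 ⟨hp, hpd⟩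
  rcases le_total q.2 q.1 with hqd | hqd
  · exact ((mem_DO_iff hz).1 (hD p hpO q hqp hqd)).1
  · have hswap : q.swap ≤ p := ⟨hqp.2.trans hpd, hqd.trans hqp.2⟩
    exact (swap_mem_rotheDiagram_iff hz).1 ((mem_DO_iff hz).1 (hD p hpO q.swap hswap hqd)).1

theorem mem_rotheDiagram_of_le_of_offDiagonal (hz : z * z = 1)
    (hD : ∀ p ∈ DSp n z, ∀ q ≤ p, q.2 < q.1 → q ∈ DSp n z) {p q : Fin n × Fin n}
    (hp : p ∈ rotheDiagram z) (hoff : p.1 ≠ p.2) (hqp : q ≤ p) : q ∈ rotheDiagram z := by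
  wlog hpd : p.2 < p.1 generalizing p q
  · rw [← swap_mem_rotheDiagram_iff hz] at hp ⊢
    exact this hp hoff.symm (Prod.swap_le_swap.2 hqp) (hoff.lt_or_gt.resolve_right hpd)
  have hpSp : p ∈ DSp n z := (mem_DSp_iff hz).2 ⟨hp, hpd⟩
  rcases lt_trichotomy q.2 q.1 with hlt | heq | hlt
  · exact ((mem_DSp_iff hz).1 (hD p hpSp q hqp hlt)).1
  · have hcol : q.2 < p.1 := hqp.2.trans_lt hpd
    have hmem : (p.1, q.2) ∈ rotheDiagram z :=
      ((mem_DSp_iff hz).1 (hD p hpSp (p.1, q.2) ⟨le_rfl, hqp.2⟩ hcol)).1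
    have hdiag : q.2 < z q.2 := hcol.trans hmem.2
    refine ⟨?_, heq ▸ hdiag⟩
    rwa [inv_eq_of_mul_eq_one_left hz, ← heq]
  · have hswap : q.swap ≤ p := ⟨hqp.2.trans hpd.le, hlt.le.trans hqp.2⟩
    exact (swap_mem_rotheDiagram_iff hz).1 ((mem_DSp_iff hz).1 (hD p hpSp q.swap hswap hlt)).1

/-- `μ` maps the interval `[i, j)` injectively into `(μ j, μ i]`. -/
theorem antitone_add_of_strictAnti (hμ : StrictAnti μ) :
    Antitone fun i : Fin k => (i : ℕ) + μ i := by
  intro i j hij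
  have hcard : (Finset.Ico i j).card ≤ (Finset.Ioc (μ j) (μ i)).card :=
    Finset.card_le_card_of_injOn μ (fun x hx => by
      obtain ⟨hix, hxj⟩ := Finset.mem_Ico.1 hx
      exact Finset.mem_Ioc.2 ⟨hμ hxj, hμ.antitone hix⟩) hμ.injective.injOn
  have := hμ.antitone hij
  simp only [Fin.card_Ico, Nat.card_Ioc] at hcard
  dsimp only
  omega

/-- The shifted Young diagrams `{(i + j - 1 + s, j) : j ∈ [k], 1 ≤ i ≤ μ_j}` (1-indexed; the
inequalities are the 0-indexed form). The diagram `D^O(z)` is compared with `s = 0` and `D^Sp(z)`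
with `s = 1`. -/
def IsShiftedDiagram (s : ℕ) (μ : Fin k → ℕ) (D : Finset (Fin n × Fin n)) : Prop :=
  ∀ p : Fin n × Fin n, p ∈ D ↔
    ∃ h : (p.2 : ℕ) < k, (p.2 : ℕ) + s ≤ p.1 ∧ (p.1 : ℕ) < p.2 + μ ⟨p.2, h⟩ + s

theorem IsShiftedDiagram.mem_of_le {s : ℕ} {D : Finset (Fin n × Fin n)}
    (hD : IsShiftedDiagram s μ D) (hμ : StrictAnti μ) {p q : Fin n × Fin n} (hp : p ∈ D)
    (hqp : q ≤ p) (hq : (q.2 : ℕ) + s ≤ q.1) : q ∈ D := by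
  obtain ⟨hk, -, hlt⟩ := (hD p).1 hp
  have hcol : (q.2 : ℕ) ≤ p.2 := hqp.2
  have hrow : (q.1 : ℕ) ≤ p.1 := hqp.1
  have hbound : (p.2 : ℕ) + μ ⟨p.2, hk⟩ ≤ q.2 + μ ⟨q.2, hcol.trans_lt hk⟩ :=
    antitone_add_of_strictAnti hμ (Fin.mk_le_mk.2 hcol)
  exact (hD q).2 ⟨hcol.trans_lt hk, hq, by omega⟩

end Dominant

theorem statement6_general (K : Type*) [Field K] (n : ℕ) :
    (∀ z : Equiv.Perm (Fin n), z * z = 1 →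
      ∀ (k : ℕ) (μ : Fin k → ℕ), StrictAnti μ → IsShiftedDiagram 0 μ (DO n z) →
        ∀ A : Matrix (Fin n) (Fin n) K, A.IsSymm →
          (A ∈ matrixSchubertVariety K z ↔ ∀ p ∈ DO n z, A p.1 p.2 = 0)) ∧
    (∀ z : Equiv.Perm (Fin n), IsFPF z →
      ∀ (k : ℕ) (μ : Fin k → ℕ), StrictAnti μ → IsShiftedDiagram 1 μ (DSp n z) →
        ∀ A : Matrix (Fin n) (Fin n) K, IsAlternating A →
          (A ∈ matrixSchubertVariety K z ↔ ∀ p ∈ DSp n z, A p.1 p.2 = 0)) := by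
  constructor
  · intro z hz k μ hμ hD A hA
    have hlower : IsLowerSet (rotheDiagram z) :=
      isLowerSet_rotheDiagram hz fun _ hp _ => hD.mem_of_le hμ hp
    exact (mem_matrixSchubertVariety_iff_of_isLowerSet hlower).trans
      (forall_mem_rotheDiagram_apply_eq_zero_iff_DO hz hA)
  · intro z hz k μ hμ hD A hA
    have hlower : ∀ p ∈ rotheDiagram z, p.1 ≠ p.2 → ∀ q ≤ p, q ∈ rotheDiagram z :=
      fun _ hp hoff _ =>
        mem_rotheDiagram_of_le_of_offDiagonal hz.1 (fun _ hp _ => hD.mem_of_le hμ hp) hp hoff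
    exact (hA.mem_matrixSchubertVariety_iff hz hlower).trans
      (forall_mem_rotheDiagram_apply_eq_zero_iff_DSp hz.1 hA)

theorem statement6 (n : ℕ) :
    (∀ z : Equiv.Perm (Fin n), z * z = 1 →
      ∀ (k : ℕ) (μ : Fin k → ℕ), StrictAnti μ → (∀ j, 0 < μ j) →
        (∀ p : Fin n × Fin n, p ∈ DO n z ↔
          ∃ h : (p.2 : ℕ) < k,
            (p.2 : ℕ) ≤ (p.1 : ℕ) ∧ (p.1 : ℕ) < (p.2 : ℕ) + μ ⟨(p.2 : ℕ), h⟩) →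
        ∀ A : Matrix (Fin n) (Fin n) ℂ, A.transpose = A →
          ((∀ i j : ℕ, i ≤ n → j ≤ n → cornerRank A i j ≤ permRank z i j) ↔
            ∀ p ∈ DO n z, A p.1 p.2 = 0)) ∧
    (n % 2 = 0 → ∀ z : Equiv.Perm (Fin n), IsFPF z →
      ∀ (k : ℕ) (μ : Fin k → ℕ), StrictAnti μ → (∀ j, 0 < μ j) →
        (∀ p : Fin n × Fin n, p ∈ DSp n z ↔
          ∃ h : (p.2 : ℕ) < k,
            (p.2 : ℕ) + 1 ≤ (p.1 : ℕ) ∧ (p.1 : ℕ) ≤ (p.2 : ℕ) + μ ⟨(p.2 : ℕ), h⟩) →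
        ∀ A : Matrix (Fin n) (Fin n) ℂ, A.transpose = -A →
          ((∀ i j : ℕ, i ≤ n → j ≤ n → cornerRank A i j ≤ permRank z i j) ↔
            ∀ p ∈ DSp n z, A p.1 p.2 = 0)) := by
  simp only [cornerRank_eq_rank_corner]
  exact ⟨fun z hz k μ hμ _ hD A hA => (statement6_general ℂ n).1 z hz k μ hμ hD A hA,
    fun _ z hz k μ hμ _ hD A hA => (statement6_general ℂ n).2 z hz k μ hμ
      (by simpa only [IsShiftedDiagram, Nat.lt_succ_iff] using hD) A (.of_transpose_eq_neg hA)⟩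

end
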